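/- For any elements $x,y$ of a Coxeter group $W$, the set $\{z \in W : x \le z \text{ and } y \le_L z\}$ has a minimum element with respect to the Bruhat order, namely $\psi^R_{y^{-1}}(x)\, y$. -/

import Mathlib

namespace PaperStmt

open scoped Classical

variable {B : Type*} {W : Type*} [Group W] {M : CoxeterMatrix B}

/-- Bruhat (strong) cover: `v = t * u` for a reflection `t`, with `ℓ v = ℓ u + 1`. -/
def BruhatCov (cs : CoxeterSystem M W) (u v : W) : Prop :=
  cs.length v = cs.length u + 1 ∧ ∃ t : W, cs.IsReflection t ∧ v = t * u

/-- The Bruhat (strong) order, generated by the covering relations. -/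
def BruhatLe (cs : CoxeterSystem M W) : W → W → Prop :=
  Relation.ReflTransGen (BruhatCov cs)

/-- Strict Bruhat order. -/
def BruhatLt (cs : CoxeterSystem M W) (u v : W) : Prop :=
  BruhatLe cs u v ∧ u ≠ v

/-- Left weak order: `u ≤_L v` iff `ℓ(v u⁻¹) + ℓ u = ℓ v`. -/
def leftLe (cs : CoxeterSystem M W) (u v : W) : Prop :=
  cs.length (v * u⁻¹) + cs.length u = cs.length v

/-- Right weak order: `u ≤_R v` iff `ℓ u + ℓ(u⁻¹ v) = ℓ v`. -/
def rightLe (cs : CoxeterSystem M W) (u v : W) : Prop :=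
  cs.length u + cs.length (u⁻¹ * v) = cs.length v

/-- Demazure action of a simple reflection: `φ_s(x) = s x` if `s x > x`, else `x`. -/
noncomputable def phi (cs : CoxeterSystem M W) (i : B) (x : W) : W :=
  if BruhatLt cs x (cs.simple i * x) then cs.simple i * x else x

/-- Anti-Demazure action: `ψ_s(x) = s x` if `s x < x`, else `x`. -/
noncomputable def psi (cs : CoxeterSystem M W) (i : B) (x : W) : W :=
  if BruhatLt cs (cs.simple i * x) x then cs.simple i * x else x

/-- Right anti-Demazure action: `ψ^R_s(x) = x s` if `x s < x`, else `x`. -/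
noncomputable def psiR (cs : CoxeterSystem M W) (i : B) (x : W) : W :=
  if BruhatLt cs (x * cs.simple i) x then x * cs.simple i else x

/-- `φ_w` along a word `w = s_1 ⋯ s_n`: `φ_{s_1} ∘ ⋯ ∘ φ_{s_n}`. -/
noncomputable def phiWord (cs : CoxeterSystem M W) (ω : List B) (x : W) : W :=
  ω.foldr (phi cs) x

/-- `ψ_w` along a word `w = s_1 ⋯ s_n`: `ψ_{s_1} ∘ ⋯ ∘ ψ_{s_n}`. -/
noncomputable def psiWord (cs : CoxeterSystem M W) (ω : List B) (x : W) : W :=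
  ω.foldr (psi cs) x

/-- `ψ^R_w` along a word `w = s_1 ⋯ s_n`: `ψ^R_{s_n} ∘ ⋯ ∘ ψ^R_{s_1}`. -/
noncomputable def psiRWord (cs : CoxeterSystem M W) (ω : List B) (x : W) : W :=
  ω.foldl (fun y i => psiR cs i y) x

/-!
The argument goes by induction along the reduced word of `y⁻¹`, and rests on two facts about the
Bruhat order, defined here through reflections.

The first is the strong exchange property. Sending `s` to the involution
`(t, e) ↦ (s t s, e + [t = s])` extends to an action of `W` on `W × ℤ/2`, and the resulting cocycle
`invSign w t` detects whether `ℓ(w t) < ℓ(w)`. Its cocycle rule says when a reflection is an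
inversion of a product (`length_mul_lt_iff`).

The second is the lifting property (`lifting`): for fixed `s`, the smaller and the larger element
of `{w, w s}` are both monotone in `w`. The smaller one is `ψ^R_s(w)`.

For the inductive step write `y = y' s` with `ℓ(y) = ℓ(y') + 1`, and let `m` be the minimum attached
to `ψ^R_s(x)` and `y'`. The claim is that `m s` is the minimum attached to `x` and `y`. If `s` were a
descent of `m`, then `m s` would lie above `ψ^R_s(x)` by lifting and above `y'` in left weak order
by exchange, contradicting minimality; hence `m < m s`, which puts `m s` in the set. Conversely any
`z` in the set has `s` as a descent, and `z s` lies in the set of `ψ^R_s(x)` and `y'`, so `m ≤ z s`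
and lifting gives `m s ≤ z`.
-/

/-! ### Strong exchange -/

/-- The involution `(t, e) ↦ (s t s, e + [t = s])` of `W × ℤ/2` attached to a simple reflection
`s = s_i`. It acts on all of `W` in the first factor, although only reflections matter. -/
noncomputable def signPerm (cs : CoxeterSystem M W) (i : B) : Equiv.Perm (W × ZMod 2) :=
  Function.Involutive.toPerm
    (fun p => (cs.simple i * p.1 * cs.simple i, p.2 + if p.1 = cs.simple i then 1 else 0)) (by
      rintro ⟨t, e⟩
      have h : cs.simple i * t * cs.simple i = cs.simple i ↔ t = cs.simple i := by
        constructor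
        · intro h
          have := congrArg (fun a => cs.simple i * a * cs.simple i) h
          simpa [mul_assoc] using this
        · rintro rfl; simp
      have h2 : (1 + 1 : ZMod 2) = 0 := by decide
      by_cases ht : t = cs.simple i
      · simp [ht, add_assoc, h2]
      · simp only [h, ht, if_false, add_zero]
        simp [mul_assoc])

theorem signPerm_apply (cs : CoxeterSystem M W) (i : B) (t : W) (e : ZMod 2) :
    signPerm cs i (t, e) =
      (cs.simple i * t * cs.simple i, e + if t = cs.simple i then 1 else 0) := rfl

theorem signPerm_word (cs : CoxeterSystem M W) (ω : List B) (t : W) (e : ZMod 2) :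
    (ω.map (signPerm cs)).prod (t, e) =
      (cs.wordProd ω * t * (cs.wordProd ω)⁻¹, e + (cs.rightInvSeq ω).count t) := by
  induction ω with
  | nil => simp
  | cons i ω ih =>
    have h : cs.wordProd ω * t * (cs.wordProd ω)⁻¹ = cs.simple i ↔
        (cs.wordProd ω)⁻¹ * cs.simple i * cs.wordProd ω = t := by
      constructor
      · intro h; rw [← h]; group
      · rintro rfl; group
    rw [List.map_cons, List.prod_cons, Equiv.Perm.mul_apply, ih, signPerm_apply]
    simp only [h, CoxeterSystem.rightInvSeq, beq_iff_eq, List.count_cons]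
    push_cast
    simp [CoxeterSystem.wordProd_cons, mul_assoc, add_assoc]

/-- The inversion sequence of `(s_i s_j)^m`, with `m = M i j`, runs twice through the same list
of reflections, so every element has even multiplicity in it. -/
theorem even_count_leftInvSeq (cs : CoxeterSystem M W) (i j : B) (t : W) :
    (((cs.leftInvSeq (CoxeterSystem.alternatingWord i j (2 * M i j))).count t : ℕ) : ZMod 2)
      = 0 := by
  set L := cs.leftInvSeq (CoxeterSystem.alternatingWord i j (2 * M i j)) with hL
  have hlen : L.length = 2 * M i j := by simp [hL]
  have hdrop : L.drop (M i j) = L.take (M i j) := by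
    apply List.ext_getElem
    · simp [hlen]; omega
    · intro k h1 h2
      simp only [List.length_drop, hlen, List.length_take] at h1 h2
      rw [List.getElem_drop, List.getElem_take]
      simp only [hL]
      rw [cs.getElem_leftInvSeq_alternatingWord i j _ _ (by omega),
        cs.getElem_leftInvSeq_alternatingWord i j _ _ (by omega),
        cs.prod_alternatingWord_eq_mul_pow, cs.prod_alternatingWord_eq_mul_pow]
      have e1 : (2 * (M i j + k) + 1) / 2 = M i j + k := by omega
      have e2 : (2 * k + 1) / 2 = k := by omega
      have e3 : ¬ Even (2 * (M i j + k) + 1) := by simp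
      have e4 : ¬ Even (2 * k + 1) := by simp
      rw [e1, e2, if_neg e3, if_neg e4, pow_add]
      simp
  rw [← List.take_append_drop (M i j) L, hdrop, List.count_append]
  push_cast
  exact CharTwo.add_self_eq_zero _

theorem signPerm_isLiftable (cs : CoxeterSystem M W) : M.IsLiftable (signPerm cs) := by
  intro i j
  have hw : (signPerm cs i * signPerm cs j) ^ M i j =
      ((CoxeterSystem.alternatingWord i j (2 * M i j)).map (signPerm cs)).prod := by
    generalize M i j = m
    induction m with
    | zero => simp [CoxeterSystem.alternatingWord]
    | succ m ih =>
      rw [pow_succ, ih, show 2 * (m + 1) = 2 * m + 1 + 1 by ring]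
      simp [CoxeterSystem.alternatingWord]
  have hinv : ∀ k, (signPerm cs k)⁻¹ = signPerm cs k := fun k => rfl
  -- The reversed word gives the inverse permutation, and its right inversion sequence is the
  -- reversal of the left one.
  rw [hw, ← inv_eq_one, List.prod_inv_reverse, List.map_map, ← List.map_reverse,
    show (fun x => x⁻¹) ∘ signPerm cs = signPerm cs from funext hinv]
  ext1 ⟨t, e⟩
  rw [signPerm_word, cs.rightInvSeq_reverse, List.count_reverse, even_count_leftInvSeq,
    cs.wordProd_reverse, cs.prod_alternatingWord_eq_mul_pow]
  simp

/-- The sign representation of `W` on `W × ℤ/2`, extending `signPerm`. -/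
noncomputable def signRep (cs : CoxeterSystem M W) : W →* Equiv.Perm (W × ZMod 2) :=
  cs.lift ⟨signPerm cs, signPerm_isLiftable cs⟩

theorem signRep_wordProd (cs : CoxeterSystem M W) (ω : List B) :
    signRep cs (cs.wordProd ω) = (ω.map (signPerm cs)).prod := by
  rw [CoxeterSystem.wordProd, map_list_prod, List.map_map]
  congr 2
  funext i
  exact cs.lift_apply_simple (signPerm_isLiftable cs) i

/-- `invSign cs w t` is the number of occurrences of `t`, modulo 2, in the right inversion sequence
of any word for `w`. -/
noncomputable def invSign (cs : CoxeterSystem M W) (w t : W) : ZMod 2 :=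
  (signRep cs w (t, 0)).2

theorem signRep_apply (cs : CoxeterSystem M W) (w t : W) (e : ZMod 2) :
    signRep cs w (t, e) = (w * t * w⁻¹, e + invSign cs w t) := by
  obtain ⟨ω, -, rfl⟩ := cs.exists_isReduced w
  simp [invSign, signRep_wordProd, signPerm_word]

theorem invSign_wordProd (cs : CoxeterSystem M W) (ω : List B) (t : W) :
    invSign cs (cs.wordProd ω) t = (cs.rightInvSeq ω).count t := by
  simp [invSign, signRep_wordProd, signPerm_word]

theorem invSign_mul (cs : CoxeterSystem M W) (a b t : W) :
    invSign cs (a * b) t = invSign cs b t + invSign cs a (b * t * b⁻¹) := by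
  have h := signRep_apply cs (a * b) t 0
  rw [map_mul, Equiv.Perm.mul_apply, signRep_apply, signRep_apply] at h
  simpa using (congrArg Prod.snd h).symm

theorem invSign_simple (cs : CoxeterSystem M W) (i : B) :
    invSign cs (cs.simple i) (cs.simple i) = 1 := by
  have h := invSign_wordProd cs [i] (cs.simple i)
  simpa [CoxeterSystem.rightInvSeq] using h

theorem invSign_self (cs : CoxeterSystem M W) {t : W} (ht : cs.IsReflection t) :
    invSign cs t t = 1 := by
  obtain ⟨u, i, rfl⟩ := ht
  have h1 : invSign cs (u * u⁻¹) (u * cs.simple i * u⁻¹) = 0 := by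
    have := invSign_wordProd cs [] (u * cs.simple i * u⁻¹)
    simpa using this
  rw [invSign_mul] at h1
  have hconj : u⁻¹ * (u * cs.simple i * u⁻¹) * u⁻¹⁻¹ = cs.simple i := by group
  rw [hconj] at h1
  rw [invSign_mul, hconj, invSign_mul, invSign_simple]
  have e : cs.simple i * cs.simple i * (cs.simple i)⁻¹ = cs.simple i := by group
  rw [e]
  linear_combination h1

theorem length_lt_of_invSign (cs : CoxeterSystem M W) {w t : W} (h : invSign cs w t = 1) :
    cs.length (w * t) < cs.length w := by
  obtain ⟨ω, hω, rfl⟩ := cs.exists_isReduced w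
  rw [invSign_wordProd] at h
  have hmem : t ∈ cs.rightInvSeq ω := by
    by_contra hn
    rw [List.count_eq_zero.mpr hn] at h
    simp at h
  exact (cs.isRightInversion_of_mem_rightInvSeq hω hmem).2

/-- The strong exchange property, in the form that `invSign` detects right inversions. -/
theorem invSign_eq_one_iff (cs : CoxeterSystem M W) {t : W} (ht : cs.IsReflection t) (w : W) :
    invSign cs w t = 1 ↔ cs.length (w * t) < cs.length w := by
  refine ⟨length_lt_of_invSign cs, fun hlt => ?_⟩
  by_contra hne
  have h0 : invSign cs w t = 0 := by
    generalize invSign cs w t = a at hne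
    revert a; decide
  have h1 : invSign cs (w * t) t = 1 := by
    rw [invSign_mul, invSign_self cs ht, ht.mul_self, one_mul, ht.inv, h0, add_zero]
  have := length_lt_of_invSign cs h1
  rw [mul_assoc, ht.mul_self, mul_one] at this
  omega

/-- The cocycle rule for right inversions of a product. -/
theorem length_mul_lt_iff (cs : CoxeterSystem M W) {t : W} (ht : cs.IsReflection t) (a b : W) :
    cs.length (a * b * t) < cs.length (a * b) ↔
      ¬(cs.length (b * t) < cs.length b ↔ cs.length (a * (b * t * b⁻¹)) < cs.length a) := by
  rw [← invSign_eq_one_iff cs ht, ← invSign_eq_one_iff cs ht,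
    ← invSign_eq_one_iff cs (ht.conj b), invSign_mul]
  generalize invSign cs b t = p
  generalize invSign cs a (b * t * b⁻¹) = q
  revert p q; decide

/-! ### The lifting property -/

theorem bruhatLe_length (cs : CoxeterSystem M W) {u v : W} (h : BruhatLe cs u v) :
    cs.length u ≤ cs.length v := by
  induction h with
  | refl => rfl
  | tail _ h ih => have := h.1; omega

/-- Covers may equally be described by multiplying with a reflection on the right. -/
theorem bruhatCov_iff (cs : CoxeterSystem M W) {u v : W} :
    BruhatCov cs u v ↔
      cs.length v = cs.length u + 1 ∧ ∃ t : W, cs.IsReflection t ∧ v = u * t := by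
  refine and_congr_right fun _ => ⟨?_, ?_⟩
  · rintro ⟨t, ht, rfl⟩
    exact ⟨u⁻¹ * t * u, by simpa using ht.conj u⁻¹, by group⟩
  · rintro ⟨t, ht, rfl⟩
    exact ⟨u * t * u⁻¹, ht.conj u, by group⟩

theorem bruhatLe_mul_simple (cs : CoxeterSystem M W) {w : W} {i : B}
    (h : ¬cs.IsRightDescent w i) : BruhatLe cs w (w * cs.simple i) :=
  .single ((bruhatCov_iff cs).2 ⟨(cs.not_isRightDescent_iff).1 h, _, cs.isReflection_simple i, rfl⟩)

theorem mul_simple_bruhatLe (cs : CoxeterSystem M W) {w : W} {i : B}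
    (h : cs.IsRightDescent w i) : BruhatLe cs (w * cs.simple i) w := by
  have := bruhatLe_mul_simple cs ((cs.isRightDescent_iff_not_isRightDescent_mul).1 h)
  simpa using this

theorem psiR_of_descent (cs : CoxeterSystem M W) {w : W} {i : B}
    (h : cs.IsRightDescent w i) : psiR cs i w = w * cs.simple i :=
  if_pos ⟨mul_simple_bruhatLe cs h, fun e => cs.length_mul_simple_ne w i (congrArg _ e)⟩

theorem psiR_of_not_descent (cs : CoxeterSystem M W) {w : W} {i : B}
    (h : ¬cs.IsRightDescent w i) : psiR cs i w = w := by
  refine if_neg fun hlt => h ?_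
  exact lt_of_le_of_ne (bruhatLe_length cs hlt.1) (cs.length_mul_simple_ne w i)

theorem psiR_not_descent (cs : CoxeterSystem M W) (w : W) (i : B) :
    ¬cs.IsRightDescent (psiR cs i w) i := by
  by_cases h : cs.IsRightDescent w i
  · rw [psiR_of_descent cs h]
    exact (cs.isRightDescent_iff_not_isRightDescent_mul).1 h
  · rwa [psiR_of_not_descent cs h]

theorem psiR_bruhatLe (cs : CoxeterSystem M W) (w : W) (i : B) :
    BruhatLe cs (psiR cs i w) w := by
  by_cases h : cs.IsRightDescent w i
  · rw [psiR_of_descent cs h]; exact mul_simple_bruhatLe cs h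
  · rw [psiR_of_not_descent cs h]; exact .refl

theorem bruhatLe_psiR_mul (cs : CoxeterSystem M W) (w : W) (i : B) :
    BruhatLe cs w (psiR cs i w * cs.simple i) := by
  by_cases h : cs.IsRightDescent w i
  · rw [psiR_of_descent cs h]; simpa using .refl
  · rw [psiR_of_not_descent cs h]; exact bruhatLe_mul_simple cs h

/-- For a cover `u < v` with `v ≠ u s`, right multiplication by `s` either gives a cover
`u s < v s`, with `s` a descent of both or of neither of `u` and `v`, or `s` is a descent of `u` and
not of `v`. -/
theorem cov_cases (cs : CoxeterSystem M W) {u v : W} (i : B) (h : BruhatCov cs u v) :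
    v = u * cs.simple i ∨
      ((cs.IsRightDescent u i ↔ cs.IsRightDescent v i) ∧
        BruhatCov cs (u * cs.simple i) (v * cs.simple i)) ∨
      (cs.IsRightDescent u i ∧ ¬cs.IsRightDescent v i) := by
  obtain ⟨hl, t, ht, rfl⟩ := (bruhatCov_iff cs).1 h
  by_cases hts : t = cs.simple i
  · exact .inl (by rw [hts])
  right
  have hcov : cs.length (u * t * cs.simple i) = cs.length (u * cs.simple i) + 1 →
      BruhatCov cs (u * cs.simple i) (u * t * cs.simple i) := fun hl' =>
    (bruhatCov_iff cs).2 ⟨hl', cs.simple i * t * cs.simple i,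
      by simpa using ht.conj (cs.simple i), by simp [mul_assoc]⟩
  by_cases hu : cs.IsRightDescent u i <;> by_cases hv : cs.IsRightDescent (u * t) i
  · refine .inl ⟨by simp [hu, hv], hcov ?_⟩
    rw [cs.isRightDescent_iff] at hu hv; omega
  · exact .inr ⟨hu, hv⟩
  · exfalso
    -- `t` is an inversion of `v = u t` other than `s`, so `s t s` is an inversion of `v s`.
    have hc := length_mul_lt_iff cs ht (u * t * cs.simple i) (cs.simple i)
    have e1 : u * t * cs.simple i * cs.simple i = u * t := by simp
    have e2 : u * t * cs.simple i * (cs.simple i * t * (cs.simple i)⁻¹) = u * cs.simple i := by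
      simp only [mul_assoc, CoxeterSystem.simple_mul_simple_cancel_left, CoxeterSystem.inv_simple]
      rw [← mul_assoc t t, ht.mul_self, one_mul]
    have e3 : u * t * t = u := by rw [mul_assoc, ht.mul_self, mul_one]
    have e4 : ¬ cs.length (cs.simple i * t) < cs.length (cs.simple i) := by
      intro hlt
      rw [cs.length_simple, Nat.lt_one_iff, cs.length_eq_zero_iff] at hlt
      exact hts (by rw [eq_inv_of_mul_eq_one_right hlt, cs.inv_simple])
    rw [e1, e2, e3] at hc
    rw [cs.not_isRightDescent_iff] at hu
    rw [cs.isRightDescent_iff] at hv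
    have := hc.1 (by omega)
    simp only [e4, false_iff, not_not] at this
    omega
  · refine .inl ⟨by simp [hu, hv], hcov ?_⟩
    rw [cs.not_isRightDescent_iff] at hu hv; omega

/-- The lifting property: both the smaller and the larger element of the coset `{w, w s}` depend
monotonically on `w`. -/
theorem lifting (cs : CoxeterSystem M W) {u v : W} (i : B) (h : BruhatLe cs u v) :
    BruhatLe cs (psiR cs i u) (psiR cs i v) ∧
      BruhatLe cs (psiR cs i u * cs.simple i) (psiR cs i v * cs.simple i) := by
  induction h with
  | refl => exact ⟨.refl, .refl⟩
  | @tail b c _ h ih =>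
    suffices hs : BruhatLe cs (psiR cs i b) (psiR cs i c) ∧
        BruhatLe cs (psiR cs i b * cs.simple i) (psiR cs i c * cs.simple i) from
      ⟨ih.1.trans hs.1, ih.2.trans hs.2⟩
    rcases cov_cases cs i h with rfl | ⟨hd, hc⟩ | ⟨hb, hc⟩
    · have : psiR cs i (b * cs.simple i) = psiR cs i b := by
        by_cases hb : cs.IsRightDescent b i
        · rw [psiR_of_descent cs hb, psiR_of_not_descent cs
            ((cs.isRightDescent_iff_not_isRightDescent_mul).1 hb)]
        · rw [psiR_of_not_descent cs hb, psiR_of_descent cs]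
          · simp
          · rw [cs.isRightDescent_iff_not_isRightDescent_mul]; simpa using hb
      rw [this]; exact ⟨.refl, .refl⟩
    · by_cases hb : cs.IsRightDescent b i
      · rw [psiR_of_descent cs hb, psiR_of_descent cs (hd.1 hb)]
        exact ⟨.single hc, by simpa using .single h⟩
      · rw [psiR_of_not_descent cs hb, psiR_of_not_descent cs (fun h' => hb (hd.2 h'))]
        exact ⟨.single h, .single hc⟩
    · have hbc : BruhatLe cs b c := .single h
      rw [psiR_of_descent cs hb, psiR_of_not_descent cs hc]
      refine ⟨(mul_simple_bruhatLe cs hb).trans hbc, ?_⟩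
      rw [cs.simple_mul_simple_cancel_right]
      exact hbc.trans (bruhatLe_mul_simple cs hc)

/-! ### The minimum -/

/-- If `z = a y'` is length-additive and `s` is a descent of `z` but not of `y'`, then
`z s` is still above `y'` in left weak order. -/
theorem leftLe_mul_simple (cs : CoxeterSystem M W) {y z : W} {i : B} (h : leftLe cs y z)
    (hz : cs.IsRightDescent z i) (hy : ¬cs.IsRightDescent y i) :
    leftLe cs y (z * cs.simple i) := by
  unfold leftLe at h ⊢
  have hc := length_mul_lt_iff cs (cs.isReflection_simple i) (z * y⁻¹) y
  rw [inv_mul_cancel_right] at hc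
  have h1 := hc.1 hz
  have hy' : ¬ cs.length (y * cs.simple i) < cs.length y := hy
  simp only [hy', false_iff, not_not] at h1
  have e : z * y⁻¹ * (y * cs.simple i * y⁻¹) = z * cs.simple i * y⁻¹ := by group
  rw [e] at h1
  have h2 := cs.length_mul_le (z * cs.simple i * y⁻¹) y
  rw [inv_mul_cancel_right] at h2
  rw [cs.isRightDescent_iff] at hz
  omega

/-- The inductive step: prolonging `y` by a simple reflection on the right. -/
theorem min_step (cs : CoxeterSystem M W) {x y m : W} {i : B} (hy : ¬cs.IsRightDescent y i)
    (h1 : BruhatLe cs (psiR cs i x) m) (h2 : leftLe cs y m)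
    (h3 : ∀ z, BruhatLe cs (psiR cs i x) z → leftLe cs y z → BruhatLe cs m z) :
    (BruhatLe cs x (m * cs.simple i) ∧ leftLe cs (y * cs.simple i) (m * cs.simple i)) ∧
      ∀ z, BruhatLe cs x z → leftLe cs (y * cs.simple i) z →
        BruhatLe cs (m * cs.simple i) z := by
  have hyl := (cs.not_isRightDescent_iff).1 hy
  have hidem : psiR cs i (psiR cs i x) = psiR cs i x :=
    psiR_of_not_descent cs (psiR_not_descent cs x i)
  have hm : ¬cs.IsRightDescent m i := by
    intro hd
    have hlo := (lifting cs i h1).1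
    rw [hidem, psiR_of_descent cs hd] at hlo
    have hle := bruhatLe_length cs (h3 _ hlo (leftLe_mul_simple cs h2 hd hy))
    rw [cs.isRightDescent_iff] at hd
    omega
  have hml := (cs.not_isRightDescent_iff).1 hm
  have hcancel : ∀ z : W, z * (y * cs.simple i)⁻¹ = z * cs.simple i * y⁻¹ := by
    intro z; simp [mul_assoc]
  refine ⟨⟨?_, ?_⟩, fun z hxz hyz => ?_⟩
  · have hhi := (lifting cs i h1).2
    rw [hidem, psiR_of_not_descent cs hm] at hhi
    exact (bruhatLe_psiR_mul cs x i).trans hhi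
  · unfold leftLe at h2 ⊢
    rw [hcancel, cs.simple_mul_simple_cancel_right]
    omega
  · unfold leftLe at hyz
    rw [hcancel] at hyz
    have hle := cs.length_mul_le (z * cs.simple i * y⁻¹) y
    rw [inv_mul_cancel_right] at hle
    have hz : cs.IsRightDescent z i := by unfold CoxeterSystem.IsRightDescent; omega
    have hzl := (cs.isRightDescent_iff).1 hz
    have hlo := (lifting cs i hxz).1
    rw [psiR_of_descent cs hz] at hlo
    have hmz := (lifting cs i (h3 _ hlo (by unfold leftLe; omega))).2
    rw [psiR_of_not_descent cs hm, psiR_of_not_descent cs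
      ((cs.isRightDescent_iff_not_isRightDescent_mul).1 hz)] at hmz
    simpa using hmz

/-- `{z | x ≤ z and y ≤_L z}` has Bruhat-minimum `ψ^R_{y⁻¹}(x) · y`, where
`ψ^R_{y⁻¹}` is computed along any reduced word `ω` for `y⁻¹`. -/
theorem stmt16 (cs : CoxeterSystem M W) (x y : W) (ω : List B)
    (hred : cs.IsReduced ω) (hω : cs.wordProd ω = y⁻¹) :
    (BruhatLe cs x (psiRWord cs ω x * y) ∧ leftLe cs y (psiRWord cs ω x * y)) ∧
      ∀ z, BruhatLe cs x z → leftLe cs y z → BruhatLe cs (psiRWord cs ω x * y) z := by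
  obtain rfl : y = (cs.wordProd ω)⁻¹ := by rw [hω, inv_inv]
  clear hω
  induction ω generalizing x with
  | nil =>
    refine ⟨⟨?_, ?_⟩, fun z hxz _ => ?_⟩
    · simp only [psiRWord, List.foldl_nil, cs.wordProd_nil, inv_one, mul_one]
      exact .refl
    · simp [leftLe]
    · simpa [psiRWord] using hxz
  | cons i ω ih =>
    have hred' : cs.IsReduced ω := by simpa using hred.drop 1
    have hy : ¬cs.IsRightDescent (cs.wordProd ω)⁻¹ i := by
      rw [cs.isRightDescent_inv_iff, cs.not_isLeftDescent_iff, ← cs.wordProd_cons, hred.eq,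
        hred'.eq, List.length_cons]
    obtain ⟨⟨h1, h2⟩, h3⟩ := ih (psiR cs i x) hred'
    have key := min_step cs hy h1 h2 h3
    rwa [mul_assoc, ← cs.inv_simple, ← mul_inv_rev, ← cs.wordProd_cons] at key
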